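/- Let θ : ℝ² → ℝ be C¹ with θ ∈ L^∞(ℝ²) ∩ L²(ℝ²) ∩ L¹(ℝ²) and ∇θ bounded, and define u(x) = lim_{ε→0⁺} ∫_{|y|>ε} y^⊥ θ(x+y)/|y|³ dy (with y^⊥ = (−y₂,y₁)). If ‖∇θ‖_{L^∞} ≥ e, then |u(x)| ≤ C log(‖∇θ‖_{L^∞}) for all x ∈ ℝ², where C depends only on ‖θ‖_{L^∞}, ‖θ‖_{L²} and ‖θ‖_{L¹}; that is, the velocity is bounded logarithmically in terms of the maximum of the gradient of θ. -/

import Mathlib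

open MeasureTheory Set Filter Topology

noncomputable section

/-- First standard basis vector of `ℝ²`. -/
def v1 : ℝ × ℝ := (1, 0)

/-- Second standard basis vector of `ℝ²`. -/
def v2 : ℝ × ℝ := (0, 1)

/-- Partial derivative of `f : ℝ² → ℝ` in the direction `v` at `x`. -/
def pd (f : ℝ × ℝ → ℝ) (v x : ℝ × ℝ) : ℝ := fderiv ℝ f x v

/-- Gradient `∇f = (∂f/∂x₁, ∂f/∂x₂)`. -/
def grad2 (f : ℝ × ℝ → ℝ) (x : ℝ × ℝ) : ℝ × ℝ := (pd f v1 x, pd f v2 x)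

/-- Euclidean norm on `ℝ²`. -/
def e2 (y : ℝ × ℝ) : ℝ := Real.sqrt (y.1 ^ 2 + y.2 ^ 2)

/-- `y^⊥ = (−y₂, y₁)`. -/
def perp (y : ℝ × ℝ) : ℝ × ℝ := (-y.2, y.1)

lemma e2_nonneg (y : ℝ × ℝ) : 0 ≤ e2 y := Real.sqrt_nonneg _

lemma e2_cont : Continuous e2 := by unfold e2; fun_prop

lemma e2_neg (y : ℝ × ℝ) : e2 (-y) = e2 y := by simp [e2]

lemma abs_fst_le (y : ℝ × ℝ) : |y.1| ≤ e2 y :=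
  Real.abs_le_sqrt (by nlinarith [sq_nonneg y.2])

lemma abs_snd_le (y : ℝ × ℝ) : |y.2| ≤ e2 y :=
  Real.abs_le_sqrt (by nlinarith [sq_nonneg y.1])

lemma norm_le_e2 (y : ℝ × ℝ) : ‖y‖ ≤ e2 y := by
  rw [Prod.norm_def]
  exact max_le (abs_fst_le y) (abs_snd_le y)

lemma perp_norm_le (y : ℝ × ℝ) : ‖perp y‖ ≤ e2 y := by
  rw [Prod.norm_def]
  refine max_le ?_ (abs_fst_le y)
  simpa [perp] using abs_snd_le y

lemma e2_le_norm (y : ℝ × ℝ) : e2 y ≤ 2 * ‖y‖ := by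
  have h1 : |y.1| ≤ ‖y‖ := norm_fst_le y
  have h2 : |y.2| ≤ ‖y‖ := norm_snd_le y
  have h0 := norm_nonneg y
  unfold e2
  apply Real.sqrt_le_iff.2
  refine ⟨by positivity, ?_⟩
  nlinarith [sq_abs y.1, sq_abs y.2, abs_nonneg y.1, abs_nonneg y.2]

lemma perp_cont : Continuous perp := by unfold perp; fun_prop

lemma ker_bound (c : ℝ) (y : ℝ × ℝ) (hy : 0 < e2 y) :
    ‖(c / (e2 y) ^ 3) • perp y‖ ≤ |c| / (e2 y) ^ 2 := by
  rw [norm_smul, Real.norm_eq_abs, abs_div, abs_of_pos (pow_pos hy 3)]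
  calc |c| / (e2 y) ^ 3 * ‖perp y‖ ≤ |c| / (e2 y) ^ 3 * e2 y := by
        gcongr; exact perp_norm_le y
    _ = |c| / (e2 y) ^ 2 := by field_simp

lemma lint_radial (φ : ℝ → ENNReal) (hφ : Measurable φ) :
    ∫⁻ y : ℝ × ℝ, φ (e2 y)
      = ENNReal.ofReal (2 * Real.pi) * ∫⁻ r in Ioi (0:ℝ), ENNReal.ofReal r * φ r := by
  rw [← lintegral_comp_polarCoord_symm]
  have h : ∀ p ∈ polarCoord.target, ENNReal.ofReal p.1 • φ (e2 (polarCoord.symm p))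
      = (ENNReal.ofReal p.1 * φ p.1) * 1 := by
    intro p hp
    have hp1 : 0 < p.1 := by
      rw [polarCoord_target] at hp
      exact hp.1
    have : e2 (polarCoord.symm p) = p.1 := by
      rw [polarCoord_symm_apply]
      unfold e2
      simp only
      rw [show (p.1 * Real.cos p.2) ^ 2 + (p.1 * Real.sin p.2) ^ 2 = p.1 ^ 2 by
        have := Real.sin_sq_add_cos_sq p.2
        linear_combination p.1 ^ 2 * this]
      exact Real.sqrt_sq hp1.le
    rw [this, mul_one, smul_eq_mul]
  rw [setLIntegral_congr_fun polarCoord.open_target.measurableSet h, polarCoord_target,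
    Measure.volume_eq_prod, ← Measure.prod_restrict,
    lintegral_prod_mul (f := fun r => ENNReal.ofReal r * φ r) (g := fun _ => 1)]
  · rw [mul_comm]
    congr 1
    rw [setLIntegral_const, one_mul, Real.volume_Ioo]
    congr 1
    ring
  · exact (ENNReal.measurable_ofReal.mul hφ).aemeasurable
  · exact aemeasurable_const

def phi1 (G : ℝ) : ℝ → ENNReal := (Ioc 0 G⁻¹).indicator fun r => ENNReal.ofReal (2 * G / r)

def phi2 (A G : ℝ) : ℝ → ENNReal := (Ioc G⁻¹ 1).indicator fun r => ENNReal.ofReal (A / r ^ 2)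

lemma phi1_meas (G : ℝ) : Measurable (phi1 G) := by
  unfold phi1
  exact Measurable.indicator (by fun_prop) measurableSet_Ioc

lemma phi2_meas (A G : ℝ) : Measurable (phi2 A G) := by
  unfold phi2
  exact Measurable.indicator (by fun_prop) measurableSet_Ioc

lemma phi1_int (G : ℝ) (hG : 0 < G) :
    ∫⁻ r in Ioi (0:ℝ), ENNReal.ofReal r * phi1 G r ≤ ENNReal.ofReal 2 := by
  calc ∫⁻ r in Ioi (0:ℝ), ENNReal.ofReal r * phi1 G r
      ≤ ∫⁻ r : ℝ, ENNReal.ofReal r * phi1 G r := setLIntegral_le_lintegral _ _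
    _ = ∫⁻ r : ℝ, (Ioc 0 G⁻¹).indicator (fun _ => ENNReal.ofReal (2 * G)) r := by
        congr 1
        ext r
        unfold phi1
        by_cases hr : r ∈ Ioc 0 G⁻¹
        · rw [indicator_of_mem hr, indicator_of_mem hr, ← ENNReal.ofReal_mul hr.1.le]
          congr 1
          have := hr.1
          field_simp
        · rw [indicator_of_notMem hr, indicator_of_notMem hr, mul_zero]
    _ = ENNReal.ofReal 2 := by
        rw [lintegral_indicator measurableSet_Ioc, setLIntegral_const, Real.volume_Ioc,
          ← ENNReal.ofReal_mul (by positivity)]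
        congr 1
        field_simp
        ring
    _ ≤ _ := le_rfl

lemma phi2_int (A G : ℝ) (hA : 0 ≤ A) (hG : 1 ≤ G) :
    ∫⁻ r in Ioi (0:ℝ), ENNReal.ofReal r * phi2 A G r ≤ ENNReal.ofReal (A * Real.log G) := by
  have hG0 : 0 < G := by linarith
  have hi : 0 < G⁻¹ := by positivity
  have hi1 : G⁻¹ ≤ 1 := inv_le_one_of_one_le₀ hG
  have hint : IntervalIntegrable (fun r : ℝ => A * r⁻¹) volume G⁻¹ 1 := by
    apply ContinuousOn.intervalIntegrable
    intro r hr
    rw [uIcc_of_le hi1] at hr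
    have : r ≠ 0 := by linarith [hr.1]
    exact (continuousAt_const.mul (continuousAt_inv₀ this)).continuousWithinAt
  calc ∫⁻ r in Ioi (0:ℝ), ENNReal.ofReal r * phi2 A G r
      ≤ ∫⁻ r : ℝ, ENNReal.ofReal r * phi2 A G r := setLIntegral_le_lintegral _ _
    _ = ∫⁻ r : ℝ, (Ioc G⁻¹ 1).indicator (fun r => ENNReal.ofReal (A * r⁻¹)) r := by
        congr 1
        ext r
        unfold phi2
        by_cases hr : r ∈ Ioc G⁻¹ 1
        · have h0 : 0 < r := hi.trans hr.1
          rw [indicator_of_mem hr, indicator_of_mem hr, ← ENNReal.ofReal_mul h0.le]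
          congr 1
          field_simp
        · rw [indicator_of_notMem hr, indicator_of_notMem hr, mul_zero]
    _ = ENNReal.ofReal (∫ r in Ioc G⁻¹ 1, A * r⁻¹) := by
        rw [lintegral_indicator measurableSet_Ioc, ofReal_integral_eq_lintegral_ofReal]
        · exact (intervalIntegrable_iff_integrableOn_Ioc_of_le hi1).1 hint
        · filter_upwards [ae_restrict_mem measurableSet_Ioc] with r hr
          have h0 : 0 < r := hi.trans hr.1
          positivity
    _ = ENNReal.ofReal (A * Real.log G) := by
        rw [← intervalIntegral.integral_of_le hi1, intervalIntegral.integral_const_mul,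
          integral_inv_of_pos hi one_pos]
        simp
    _ ≤ _ := le_rfl

lemma theta_lip (θ : ℝ × ℝ → ℝ) (G : ℝ) (h : ContDiff ℝ 1 θ)
    (hG : ∀ y, e2 (grad2 θ y) ≤ G) (x y : ℝ × ℝ) : |θ (x + y) - θ x| ≤ 2 * G * e2 y := by
  have hG0 : 0 ≤ G := (e2_nonneg _).trans (hG 0)
  have hb : ∀ z ∈ (univ : Set (ℝ × ℝ)), ‖fderiv ℝ θ z‖ ≤ 2 * G := by
    intro z _
    apply ContinuousLinearMap.opNorm_le_bound _ (by positivity)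
    intro v
    have hv : v = v.1 • v1 + v.2 • v2 := by ext <;> simp [v1, v2]
    have h1 : |fderiv ℝ θ z v1| ≤ G := (abs_fst_le (grad2 θ z)).trans (hG z)
    have h2 : |fderiv ℝ θ z v2| ≤ G := (abs_snd_le (grad2 θ z)).trans (hG z)
    have h3 : |v.1| ≤ ‖v‖ := norm_fst_le v
    have h4 : |v.2| ≤ ‖v‖ := norm_snd_le v
    have h5 : fderiv ℝ θ z v = v.1 * fderiv ℝ θ z v1 + v.2 * fderiv ℝ θ z v2 := by
      conv_lhs => rw [hv]
      simp
    rw [h5, Real.norm_eq_abs]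
    calc _ ≤ |v.1 * fderiv ℝ θ z v1| + |v.2 * fderiv ℝ θ z v2| := abs_add_le _ _
      _ = |v.1| * |fderiv ℝ θ z v1| + |v.2| * |fderiv ℝ θ z v2| := by rw [abs_mul, abs_mul]
      _ ≤ ‖v‖ * G + ‖v‖ * G := by gcongr
      _ = _ := by ring
  have := (convex_univ).norm_image_sub_le_of_norm_fderiv_le (𝕜 := ℝ) (f := θ)
    (fun z _ => (h.differentiable (by norm_num)).differentiableAt) hb (mem_univ x)
    (mem_univ (x + y))
  rw [add_sub_cancel_left] at this
  calc _ ≤ 2 * G * ‖y‖ := this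
    _ ≤ _ := by gcongr; exact norm_le_e2 y

lemma main_bound (A D : ℝ) (θ : ℝ × ℝ → ℝ) (G : ℝ) (h : ContDiff ℝ 1 θ)
    (hA : ∀ y, |θ y| ≤ A) (hI : Integrable θ) (hD : (∫ y, |θ y|) ≤ D)
    (hG : ∀ y, e2 (grad2 θ y) ≤ G) (hG1 : 1 ≤ G) (x : ℝ × ℝ) (ε : ℝ) (hε : 0 < ε)
    (hεG : ε < G⁻¹) :
    ‖∫ y in {y : ℝ × ℝ | ε < e2 y}, (θ (x + y) / (e2 y) ^ 3) • perp y‖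
      ≤ D + 2 * Real.pi * (2 + A * Real.log G) := by
  have hG0 : 0 < G := by linarith
  have hi1 : G⁻¹ ≤ 1 := inv_le_one_of_one_le₀ hG1
  have hA0 : 0 ≤ A := (abs_nonneg _).trans (hA 0)
  have hlog : 0 ≤ Real.log G := Real.log_nonneg hG1
  have hpi := Real.pi_pos
  have hD0 : 0 ≤ D := le_trans (integral_nonneg fun _ => abs_nonneg _) hD
  set T : Set (ℝ × ℝ) := {y | ε < e2 y} with hT
  set S : Set (ℝ × ℝ) := {y | ε < e2 y ∧ e2 y ≤ G⁻¹} with hS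
  have hTm : MeasurableSet T := measurableSet_lt measurable_const e2_cont.measurable
  have hSm : MeasurableSet S := hTm.inter (measurableSet_le e2_cont.measurable measurable_const)
  set F : ℝ × ℝ → ℝ × ℝ := fun y => (θ (x + y) / (e2 y) ^ 3) • perp y with hF
  set K : ℝ × ℝ → ℝ × ℝ := fun y => (θ x / (e2 y) ^ 3) • perp y with hK
  have he := e2_cont.measurable
  have hp := perp_cont.measurable
  have ht := h.continuous.measurable
  have hFm : Measurable F := by
    rw [hF]; fun_prop
  have hKm : Measurable K := by
    rw [hK]; fun_prop
  have hIx : Integrable (fun y => θ (x + y)) := hI.comp_add_left x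
  have hFi : Integrable (T.indicator F) := by
    refine Integrable.mono' ((hIx.abs).div_const (ε ^ 2)) (hFm.indicator hTm).aestronglyMeasurable
      (Eventually.of_forall fun y => ?_)
    by_cases hy : y ∈ T
    · rw [indicator_of_mem hy]
      have hy' : ε < e2 y := hy
      refine (ker_bound _ y (hε.trans hy')).trans ?_
      gcongr
    · rw [indicator_of_notMem hy, norm_zero]
      positivity
  have hKi : Integrable (S.indicator K) := by
    rw [integrable_indicator_iff hSm]
    refine IntegrableOn.of_bound (C := A / ε ^ 2) ?_ hKm.aestronglyMeasurable ?_
    · refine lt_of_le_of_lt (measure_mono ?_)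
        (measure_closedBall_lt_top (x := (0 : ℝ × ℝ)) (r := G⁻¹))
      intro y hy
      rw [mem_closedBall_zero_iff]
      exact (norm_le_e2 y).trans hy.2
    · filter_upwards [ae_restrict_mem hSm] with y hy
      have hy' : ε < e2 y := hy.1
      refine (ker_bound _ y (hε.trans hy')).trans ?_
      gcongr
      exact hA x
  have hK0 : ∫ y, S.indicator K y = 0 := by
    have h1 := integral_neg_eq_self (S.indicator K) (volume : Measure (ℝ × ℝ))
    have h2 : ∀ y, S.indicator K (-y) = - S.indicator K y := by
      intro y
      have hm : -y ∈ S ↔ y ∈ S := by simp only [hS, mem_ofPred_eq, e2_neg]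
      by_cases hy : y ∈ S
      · rw [indicator_of_mem hy, indicator_of_mem (hm.2 hy)]
        simp only [hK, e2_neg]
        ext <;> simp [perp]
      · rw [indicator_of_notMem hy, indicator_of_notMem (fun h => hy (hm.1 h)), neg_zero]
    simp only [h2] at h1
    rw [integral_neg] at h1
    exact self_eq_neg.1 h1.symm
  have hEq : ∫ y in T, F y = ∫ y, (T.indicator F y - S.indicator K y) := by
    rw [integral_sub hFi hKi, hK0, sub_zero, integral_indicator hTm]
  rw [hEq]
  have hpt : ∀ y, ‖T.indicator F y - S.indicator K y‖ₑ
      ≤ ENNReal.ofReal |θ (x + y)| + (phi1 G (e2 y) + phi2 A G (e2 y)) := by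
    intro y
    by_cases hy : y ∈ T
    · have hy0 : 0 < e2 y := hε.trans hy
      rw [indicator_of_mem hy]
      by_cases hy2 : e2 y ≤ G⁻¹
      · have hs : y ∈ S := ⟨hy, hy2⟩
        rw [indicator_of_mem hs]
        refine le_trans ?_ (le_add_left (le_add_right le_rfl))
        unfold phi1
        rw [indicator_of_mem (show e2 y ∈ Ioc 0 G⁻¹ from ⟨hy0, hy2⟩), ← ofReal_norm]
        apply ENNReal.ofReal_le_ofReal
        have : F y - K y = ((θ (x + y) - θ x) / (e2 y) ^ 3) • perp y := by
          simp only [hF, hK]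
          rw [← sub_smul, sub_div]
        rw [this]
        refine (ker_bound _ y hy0).trans ?_
        calc _ ≤ 2 * G * e2 y / e2 y ^ 2 := by
              gcongr; exact theta_lip θ G h hG x y
          _ = _ := by field_simp
      · have hs : y ∉ S := fun h => hy2 h.2
        rw [indicator_of_notMem hs, sub_zero, ← ofReal_norm]
        have hb := ker_bound (θ (x + y)) y hy0
        by_cases hy3 : e2 y ≤ 1
        · refine le_trans ?_ (le_add_left (le_add_left le_rfl))
          unfold phi2
          rw [indicator_of_mem (show e2 y ∈ Ioc G⁻¹ 1 from ⟨not_le.1 hy2, hy3⟩)]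
          apply ENNReal.ofReal_le_ofReal
          refine hb.trans ?_
          gcongr
          exact hA _
        · refine le_trans ?_ (le_add_right le_rfl)
          apply ENNReal.ofReal_le_ofReal
          refine hb.trans ?_
          apply div_le_self (abs_nonneg _)
          exact one_le_pow₀ (not_le.1 hy3).le
    · have hs : y ∉ S := fun h => hy h.1
      rw [indicator_of_notMem hy, indicator_of_notMem hs]
      simp
  have hθ : ∫⁻ y, ENNReal.ofReal |θ (x + y)| ≤ ENNReal.ofReal D := by
    rw [← ofReal_integral_eq_lintegral_ofReal hIx.abs (Eventually.of_forall fun _ => abs_nonneg _)]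
    apply ENNReal.ofReal_le_ofReal
    rw [integral_add_left_eq_self (fun y => |θ y|) x]
    exact hD
  have hfin : ‖∫ y, (T.indicator F y - S.indicator K y)‖ₑ
      ≤ ENNReal.ofReal (D + 2 * Real.pi * (2 + A * Real.log G)) := by
    calc _ ≤ ∫⁻ y, ‖T.indicator F y - S.indicator K y‖ₑ := enorm_integral_le_lintegral_enorm _
      _ ≤ ∫⁻ y, (ENNReal.ofReal |θ (x + y)| + (phi1 G (e2 y) + phi2 A G (e2 y))) :=
          lintegral_mono hpt
      _ = (∫⁻ y, ENNReal.ofReal |θ (x + y)|)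
          + ((∫⁻ y, phi1 G (e2 y)) + ∫⁻ y, phi2 A G (e2 y)) := by
          rw [lintegral_add_left (by fun_prop), lintegral_add_left
            (show Measurable fun y => phi1 G (e2 y) from (phi1_meas G).comp he)]
      _ ≤ ENNReal.ofReal D + (ENNReal.ofReal (2 * Real.pi) * ENNReal.ofReal 2
          + ENNReal.ofReal (2 * Real.pi) * ENNReal.ofReal (A * Real.log G)) := by
          rw [lint_radial _ (phi1_meas G), lint_radial _ (phi2_meas A G)]
          gcongr
          · exact phi1_int G hG0
          · exact phi2_int A G hA0 hG1
      _ = _ := by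
          rw [← mul_add, ← ENNReal.ofReal_add (by norm_num) (by positivity),
            ← ENNReal.ofReal_mul (by positivity), ← ENNReal.ofReal_add hD0 (by positivity)]
  rw [← ofReal_norm] at hfin
  exact (ENNReal.ofReal_le_ofReal_iff (by positivity)).1 hfin

/-- **Logarithmic velocity bound.** Let `θ : ℝ² → ℝ` be `C¹`, in `L^∞ ∩ L² ∩ L¹` with
norms bounded by `A`, `B`, `D`, with `|∇θ| ≤ G` and `G ≥ e`, and let
`u(x) = P.V.∫ y^⊥ θ(x+y)/|y|³ dy`. Then `|u(x)| ≤ C log G` for all `x`, where `C`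
depends only on `A`, `B`, `D`. -/
theorem velocity_log_gradient_bound (A B D : ℝ) :
    ∃ C : ℝ, 0 < C ∧
      ∀ θ : ℝ × ℝ → ℝ, ∀ u : ℝ × ℝ → ℝ × ℝ, ∀ G : ℝ,
        ContDiff ℝ 1 θ →
        (∀ y, |θ y| ≤ A) →
        Integrable (fun y => (θ y) ^ 2) →
        Real.sqrt (∫ y, (θ y) ^ 2) ≤ B →
        Integrable θ →
        (∫ y, |θ y|) ≤ D →
        (∀ y, e2 (grad2 θ y) ≤ G) →
        Real.exp 1 ≤ G →
        (∀ x : ℝ × ℝ,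
          Tendsto (fun ε : ℝ =>
              ∫ y in {y : ℝ × ℝ | ε < e2 y}, (θ (x + y) / (e2 y) ^ 3) • perp y)
            (𝓝[>] 0) (𝓝 (u x))) →
        ∀ x : ℝ × ℝ, e2 (u x) ≤ C * Real.log G := by
  have hpi := Real.pi_pos
  refine ⟨2 * (|D| + 2 * Real.pi * (2 + |A|)), by positivity, ?_⟩
  intro θ u G h hA _ _ hI hD hG hGe hu x
  have hG1 : 1 ≤ G := by
    have := Real.add_one_le_exp (1:ℝ)
    linarith
  have hG0 : 0 < G := by linarith
  have hlog : 1 ≤ Real.log G := (Real.le_log_iff_exp_le hG0).2 hGe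
  have hb : ‖u x‖ ≤ D + 2 * Real.pi * (2 + A * Real.log G) := by
    refine le_of_tendsto (hu x).norm ?_
    filter_upwards [Ioo_mem_nhdsGT (show (0:ℝ) < G⁻¹ by positivity)] with ε hε
    exact main_bound A D θ G h hA hI hD hG hG1 x ε hε.1 hε.2
  have h1 : D ≤ |D| * Real.log G :=
    (le_abs_self D).trans (le_mul_of_one_le_right (abs_nonneg D) hlog)
  have h2 : 2 + A * Real.log G ≤ (2 + |A|) * Real.log G := by
    nlinarith [le_abs_self A]
  calc e2 (u x) ≤ 2 * ‖u x‖ := e2_le_norm _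
    _ ≤ 2 * (|D| * Real.log G + 2 * Real.pi * ((2 + |A|) * Real.log G)) := by
        gcongr
        refine hb.trans ?_
        gcongr
    _ = _ := by ring

end
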